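/- arXiv:1309.2393 — 2 statements merged into one kernel-verified Lean document; each statement's English description precedes it below -/
import Mathlib

section
/- Let X be a nonempty set, H a Hermitian kernel on X, and L a positive semidefinite kernel on X such that both L − H and L + H are positive semidefinite. Then there exist positive semidefinite kernels H₊ and H₋ on X such that H = H₊ − H₋, both L − H₊ and L − H₋ are positive semidefinite, and H₊ and H₋ are independent in the sense that every positive semidefinite kernel P on X for which H₊ − P and H₋ − P are both positive semidefinite is the zero kernel. -/
open scoped ComplexOrder

/-- The inner product `[f,g]_K = ∑_{x,y} K(x,y) f(y) conj(g(x))` associated to a kernel `K`,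
for finitely supported `f, g : X → ℂ`. -/
noncomputable def kerIP {X : Type*} (K : X → X → ℂ) (f g : X →₀ ℂ) : ℂ :=
  ∑ x ∈ g.support, ∑ y ∈ f.support, K x y * f y * (starRingEnd ℂ) (g x)

/-- A kernel is positive semidefinite if `[f,f]_K` is real and nonnegative for all
finitely supported `f`. -/
def IsPSDKernel {X : Type*} (K : X → X → ℂ) : Prop := ∀ f : X →₀ ℂ, 0 ≤ kerIP K f f

/-- A kernel is Hermitian if `K(x,y) = conj (K(y,x))`. -/
def IsHermitianKernel {X : Type*} (K : X → X → ℂ) : Prop :=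
  ∀ x y, K x y = (starRingEnd ℂ) (K y x)

/-!
In the Loewner order, the positive semidefinite `K` for which `K - H`, `L - K` and `L - (K - H)` are
also positive semidefinite form an intersection of two order intervals, and `(L + H) / 2` is one of
them. Order intervals are compact for entrywise convergence: the entries of a positive semidefinite
matrix are bounded by its diagonal, so Tychonoff's theorem applies. Hence there is a minimal such
`K`, and `K`, `K - H` are independent because subtracting a common lower bound `P ≥ 0` from `K`
stays in the set.
-/

open Set
open scoped MatrixOrder

theorem exists_minimal_of_isCompact {α : Type*} [Preorder α] [TopologicalSpace α]
    [ClosedIicTopology α] {s : Set α} (hs : IsCompact s) (hne : s.Nonempty) :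
    ∃ m, Minimal (· ∈ s) m := by
  suffices hchain : ∀ c ⊆ s, IsChain (· ≥ ·) c → ∃ lb ∈ s, ∀ a ∈ c, lb ≤ a from
    zorn_le₀ (α := αᵒᵈ) s hchain
  intro c hcs hc
  rcases c.eq_empty_or_nonempty with rfl | hcne
  · exact hne.imp fun a ha => ⟨ha, by simp⟩
  have : Nonempty c := hcne.to_subtype
  have hdir : Directed (· ⊇ ·) fun a : c => Iic (a : α) :=
    hc.directedOn.directed_val.mono_comp (g := Iic) _ fun _ _ => Iic_subset_Iic.2
  have hlb : (s ∩ ⋂ a : c, Iic (a : α)).Nonempty := by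
    rw [nonempty_iff_ne_empty]
    intro hempty
    obtain ⟨a, ha⟩ := hs.elim_directed_family_closed _ (fun _ => isClosed_Iic) hempty hdir
    exact (ha ▸ ⟨hcs a.2, le_rfl⟩ : (a : α) ∈ (∅ : Set α))
  obtain ⟨lb, hlbs, hlbc⟩ := hlb
  exact ⟨lb, hlbs, fun a ha => mem_iInter.1 hlbc ⟨a, ha⟩⟩

section OrderedGroup

variable {E : Type*} [AddCommGroup E] [PartialOrder E]

/-- Independence of two elements of the positive cone: they have no common nonnegative lower bound
other than zero. -/
def IsIndependent (a b : E) : Prop :=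
  ∀ p, 0 ≤ p → p ≤ a → p ≤ b → p = 0

/-- The elements `k` for which `h = k - (k - h)` writes `h` as a difference of two elements of
`Icc 0 l`. The condition `k - h ∈ Icc 0 l` is encoded as `k ∈ Icc h (l + h)`. -/
def dominatedSplittings (h l : E) : Set E :=
  Icc 0 l ∩ Icc h (l + h)

theorem isCompact_dominatedSplittings [TopologicalSpace E] [OrderClosedTopology E]
    [CompactIccSpace E] (h l : E) : IsCompact (dominatedSplittings h l) :=
  isCompact_Icc.inter_right isClosed_Icc

variable [IsOrderedAddMonoid E]

theorem nonempty_dominatedSplittings [Module ℝ E] [PosSMulMono ℝ E] {h l : E} (hhl : h ≤ l)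
    (hneg : -h ≤ l) : (dominatedSplittings h l).Nonempty := by
  have hsum : 0 ≤ (2⁻¹ : ℝ) • (l + h) := smul_nonneg (by simp) (neg_le_iff_add_nonneg.1 hneg)
  have hdiff : 0 ≤ (2⁻¹ : ℝ) • (l - h) := smul_nonneg (by simp) (sub_nonneg.2 hhl)
  refine ⟨(2⁻¹ : ℝ) • (l + h), ⟨hsum, ?_⟩, ?_, ?_⟩
  · convert! add_le_add_right hdiff ((2⁻¹ : ℝ) • (l + h)) using 1 <;> module
  · convert! add_le_add_right hdiff h using 1 <;> module
  · convert! add_le_add_right hsum ((2⁻¹ : ℝ) • (l + h)) using 1 <;> module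

theorem isIndependent_of_minimal_dominatedSplittings {h l k : E}
    (hk : Minimal (· ∈ dominatedSplittings h l) k) : IsIndependent k (k - h) := by
  intro p hp hpk hpkh
  obtain ⟨⟨-, hkl⟩, -, hklh⟩ := hk.prop
  have hle : k - p ≤ k := sub_le_self k hp
  have hmem : k - p ∈ dominatedSplittings h l :=
    ⟨⟨sub_nonneg.2 hpk, hle.trans hkl⟩, le_sub_comm.1 hpkh, hle.trans hklh⟩
  exact sub_eq_self.1 (hk.eq_of_le hmem hle)

theorem exists_isIndependent_sub_eq [Module ℝ E] [PosSMulMono ℝ E] [TopologicalSpace E]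
    [OrderClosedTopology E] [CompactIccSpace E] {h l : E} (hhl : h ≤ l) (hneg : -h ≤ l) :
    ∃ a ∈ Icc 0 l, ∃ b ∈ Icc 0 l, h = a - b ∧ IsIndependent a b := by
  obtain ⟨k, hk⟩ := exists_minimal_of_isCompact (isCompact_dominatedSplittings h l)
    (nonempty_dominatedSplittings hhl hneg)
  obtain ⟨hkl, hhk, hklh⟩ := hk.prop
  exact ⟨k, hkl, k - h, ⟨sub_nonneg.2 hhk, sub_le_iff_le_add.2 hklh⟩, (sub_sub_cancel k h).symm,
    isIndependent_of_minimal_dominatedSplittings hk⟩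

end OrderedGroup

section LoewnerOrder

variable {n 𝕜 : Type*} [RCLike 𝕜]

theorem norm_apply_sq_le_of_posSemidef {A : Matrix n n 𝕜} (hA : A.PosSemidef) (i j : n) :
    ‖A i j‖ ^ 2 ≤ ‖A i i‖ * ‖A j j‖ := by
  have hdet : 0 ≤ A i i * A j j - A i j * A j i :=
    Matrix.det_fin_two (A.submatrix ![i, j] ![i, j]) ▸ (hA.submatrix ![i, j]).det_nonneg
  have hswap : A i j * A j i = (‖A i j‖ ^ 2 : ℝ) := by
    rw [← hA.isHermitian.apply j i, RCLike.star_def, RCLike.mul_conj, RCLike.ofReal_pow]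
  rw [hswap, sub_nonneg, ← RCLike.norm_of_nonneg' (hA.diag_nonneg (i := i)),
    ← RCLike.norm_of_nonneg' (hA.diag_nonneg (i := j)), ← RCLike.ofReal_mul] at hdet
  exact RCLike.ofReal_le_ofReal.1 hdet

theorem norm_apply_self_le_of_le {A B : Matrix n n 𝕜} (hA : A.PosSemidef) (hAB : A ≤ B) (i : n) :
    ‖A i i‖ ≤ ‖B i i‖ := by
  have hdiag : A i i ≤ B i i := sub_nonneg.1 hAB.diag_nonneg
  have hnonneg : 0 ≤ A i i := hA.diag_nonneg
  rwa [← RCLike.ofReal_le_ofReal (K := 𝕜), RCLike.norm_of_nonneg' hnonneg,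
    RCLike.norm_of_nonneg' (hnonneg.trans hdiag)]

theorem isClosed_setOf_posSemidef : IsClosed {A : Matrix n n 𝕜 | A.PosSemidef} := by
  refine IsClosed.and (isClosed_eq (by fun_prop) continuous_id) ?_
  simp only [ofPred_forall]
  refine isClosed_iInter fun x => isClosed_le continuous_const ?_
  unfold Finsupp.sum
  fun_prop

instance matrix_orderClosedTopology : OrderClosedTopology (Matrix n n 𝕜) where
  isClosed_le' := isClosed_setOf_posSemidef.preimage (continuous_snd.sub continuous_fst)

instance matrix_compactIccSpace : CompactIccSpace (Matrix n n 𝕜) where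
  isCompact_Icc {A B} := by
    let box : Set (Matrix n n 𝕜) := univ.pi fun i => univ.pi fun j =>
      Metric.closedBall (A i j) (√(‖(B - A) i i‖ * ‖(B - A) j j‖))
    have hbox : IsCompact box :=
      isCompact_univ_pi fun i => isCompact_univ_pi fun j => isCompact_closedBall _ _
    refine hbox.of_isClosed_subset isClosed_Icc ?_
    rintro K ⟨hAK, hKB⟩ i - j -
    have hdiag (x : n) : ‖(K - A) x x‖ ≤ ‖(B - A) x x‖ :=
      norm_apply_self_le_of_le hAK (sub_le_sub_right hKB A) x
    rw [mem_closedBall_iff_norm]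
    refine Real.le_sqrt_of_sq_le ((norm_apply_sq_le_of_posSemidef hAK i j).trans ?_)
    gcongr <;> apply hdiag

instance matrix_posSMulMono : PosSMulMono ℝ (Matrix n n 𝕜) where
  smul_le_smul_of_nonneg_left c hc A B hAB := by
    rw [Matrix.le_iff, ← smul_sub]
    exact Matrix.PosSemidef.smul hAB hc

end LoewnerOrder

section Kernel

variable {X : Type*}

theorem kerIP_eq_sum (K : X → X → ℂ) (f g : X →₀ ℂ) :
    kerIP K f g = g.sum fun x b => f.sum fun y a => star b * K x y * a := by
  simp only [kerIP, Finsupp.sum, starRingEnd_apply]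
  exact Finset.sum_congr rfl fun x _ => Finset.sum_congr rfl fun y _ => by ring

theorem kerIP_single_add_single (K : X → X → ℂ) (x y : X) (c : ℂ) :
    kerIP K (.single x 1 + .single y c) (.single x 1 + .single y c) =
      K x x + K x y * c + star c * (K y x + K y y * c) := by
  simp only [kerIP_eq_sum, RCLike.star_def, mul_assoc, mul_zero, implies_true, mul_add,
    Finsupp.sum_add_index', Finsupp.sum_single_index, mul_one, Finsupp.sum_add, map_zero, zero_mul,
    map_add, add_mul, map_one, one_mul]
  ring

theorem isHermitianKernel_of_isPSDKernel {K : X → X → ℂ} (hK : IsPSDKernel K) :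
    IsHermitianKernel K := by
  intro x y
  have hreal (a b : X) (c : ℂ) : (K a a + K a b * c + star c * (K b a + K b b * c)).im = 0 :=
    (kerIP_single_add_single K a b c ▸ hK _ : (0 : ℂ) ≤ _).2.symm
  have hdiag (a : X) : (K a a).im = 0 := by simpa using hreal a a 0
  have him : (K x y + K y x).im = 0 := by simpa [hdiag] using hreal x y 1
  have hre : (K x y - K y x).re = 0 := by
    simpa [hdiag, sub_eq_add_neg] using hreal x y Complex.I
  exact Complex.ext (sub_eq_zero.1 hre) (eq_neg_of_add_eq_zero_left him)

theorem isPSDKernel_iff_posSemidef {K : X → X → ℂ} :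
    IsPSDKernel K ↔ (Matrix.of K).PosSemidef := by
  have hform : IsPSDKernel K ↔
      ∀ f : X →₀ ℂ, 0 ≤ f.sum fun x a => f.sum fun y b => star a * K x y * b := by
    simp only [IsPSDKernel, kerIP_eq_sum]
  refine ⟨fun hK => ⟨?_, hform.1 hK⟩, fun hK => hform.2 hK.2⟩
  exact Matrix.IsHermitian.ext fun x y => (isHermitianKernel_of_isPSDKernel hK x y).symm

end Kernel

theorem stmt1_general {X 𝕜 : Type*} [RCLike 𝕜] {H L : Matrix X X 𝕜} (hLmH : (L - H).PosSemidef)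
    (hLpH : (L + H).PosSemidef) :
    ∃ Hp Hm : Matrix X X 𝕜, Hp.PosSemidef ∧ Hm.PosSemidef ∧ H = Hp - Hm ∧
      (L - Hp).PosSemidef ∧ (L - Hm).PosSemidef ∧
      ∀ P : Matrix X X 𝕜, P.PosSemidef → (Hp - P).PosSemidef → (Hm - P).PosSemidef → P = 0 := by
  have hHL : H ≤ L := hLmH
  have hneg : -H ≤ L := neg_le_iff_add_nonneg.2 hLpH.nonneg
  obtain ⟨Hp, ⟨hp, hpL⟩, Hm, ⟨hm, hmL⟩, hH, hind⟩ := exists_isIndependent_sub_eq hHL hneg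
  rw [Matrix.nonneg_iff_posSemidef] at hp hm
  exact ⟨Hp, Hm, hp, hm, hH, hpL, hmL, fun P hP => hind P hP.nonneg⟩

/-- If `H` is a Hermitian kernel and `L` is a positive semidefinite kernel with
`L − H` and `L + H` positive semidefinite, then `H = H₊ − H₋` with `H₊, H₋` positive
semidefinite, `L − H₊`, `L − H₋` positive semidefinite, and `H₊, H₋` independent. -/
theorem stmt1 {X : Type*} [Nonempty X] (H L : X → X → ℂ)
    (hH : IsHermitianKernel H) (hL : IsPSDKernel L)
    (hLmH : IsPSDKernel (fun x y => L x y - H x y))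
    (hLpH : IsPSDKernel (fun x y => L x y + H x y)) :
    ∃ Hp Hm : X → X → ℂ, IsPSDKernel Hp ∧ IsPSDKernel Hm ∧
      (∀ x y, H x y = Hp x y - Hm x y) ∧
      IsPSDKernel (fun x y => L x y - Hp x y) ∧
      IsPSDKernel (fun x y => L x y - Hm x y) ∧
      (∀ P : X → X → ℂ, IsPSDKernel P →
        IsPSDKernel (fun x y => Hp x y - P x y) →
        IsPSDKernel (fun x y => Hm x y - P x y) → ∀ x y, P x y = 0) := by
  simp only [isPSDKernel_iff_posSemidef] at hLmH hLpH ⊢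
  obtain ⟨Hp, Hm, hp, hm, hH, hpL, hmL, hind⟩ := stmt1_general hLmH hLpH
  exact ⟨Hp, Hm, hp, hm, congrFun₂ hH, hpL, hmL, fun P h h₁ h₂ => congrFun₂ (hind P h h₁ h₂)⟩
end

section
/- Let Ω ⊆ ℂ be a nonempty open connected set and let K : Ω × Ω → ℂ be a Hermitian kernel (K(z,w) = conj(K(w,z))) such that for every w ∈ Ω the function z ↦ K(z,w) is holomorphic on Ω. Let Ω₀ ⊆ Ω be a nonempty open subset, and let K₀ denote the restriction of K to Ω₀ × Ω₀. If the negative signature κ₋(K₀) is finite, then κ₋(K) = κ₋(K₀). -/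
open scoped ComplexOrder

/-- The negative signature `κ₋(K)` of a Hermitian kernel: the supremum, in `ℕ∞`, of the
dimensions of subspaces `N` of finitely supported functions on which `[f,f]_K < 0` for all
nonzero `f ∈ N`. -/
noncomputable def negSig {X : Type*} (K : X → X → ℂ) : ℕ∞ :=
  ⨆ N ∈ {N : Submodule ℂ (X →₀ ℂ) | ∀ f ∈ N, f ≠ 0 → kerIP K f f < 0},
    (Module.rank ℂ N).toENat

/-!
`κ₋(K) ≥ n` means that some `n` finitely supported functions span a negative subspace, which is an
open condition on their Gram matrix. Such functions can be moved from `U ∪ ball c t` into `U` when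
`U` meets the ball: a point evaluation at `z ∈ ball c t` is the limit of Newton interpolation
functionals at nodes in `U ∩ ball c t`, uniformly on holomorphic functions bounded by `1` on
`closedBall c (9 * t)`, so the Gram matrix converges provided `K` is bounded on
`closedBall c (9 * t) × closedBall c (9 * t)`. A maximality argument then propagates `κ₋ ≥ n` from
the connected set `Ω` to `Ω₀`.

A kernel separately holomorphic in `z` and `conj w` is locally bounded by Hartogs' theorem: Osgood's
lemma (Baire) bounds it on a small product set, and the coefficients of its Newton expansion at
nodes there are bounded geometrically, at a crude rate uniformly and at the good rate pointwise;
Hartogs' lemma makes the good rate uniform.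
-/

open MeasureTheory Metric Set Filter Topology

lemma isOpen_setOf_exists_lt {X ι : Type*} [TopologicalSpace X] {S : Set X} (hS : IsOpen S)
    {g : ι → X → ℝ} (hg : ∀ i, ContinuousOn (g i) S) (C : ℝ) :
    IsOpen {x ∈ S | ∃ i, C < g i x} := by
  have hunion : {x ∈ S | ∃ i, C < g i x} = ⋃ i, S ∩ g i ⁻¹' Ioi C := by
    ext
    simp
  rw [hunion]
  exact isOpen_iUnion fun i => (hg i).isOpen_inter_preimage hS isOpen_Ioi

lemma log_norm_le_circleAverage_log_norm {f : ℂ → ℂ} {c : ℂ} {s : ℝ} (hs : 0 < s)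
    (hf : AnalyticOnNhd ℂ f (closedBall c s)) (hc : f c ≠ 0) :
    Real.log ‖f c‖ ≤ Real.circleAverage (fun z => Real.log ‖f z‖) c s := by
  have hf' : AnalyticOnNhd ℂ f (closedBall c |s|) := by rwa [abs_of_pos hs]
  rw [AnalyticOnNhd.circleAverage_log_norm hs.ne' hf' hc]
  refine le_add_of_nonneg_left (finsum_nonneg fun u => ?_)
  by_cases hu : u ∈ closedBall c |s|
  · refine mul_nonneg (by exact_mod_cast MeromorphicOn.AnalyticOnNhd.divisor_nonneg hf' u) ?_
    rcases eq_or_ne c u with rfl | hne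
    · simp
    · refine Real.log_nonneg ?_
      rw [← div_eq_mul_inv, one_le_div (norm_sub_pos_iff.2 hne), ← dist_eq_norm, dist_comm]
      rwa [abs_of_pos hs] at hu
  · simp [hu]

lemma circleAverage_indicator_const {W : Set ℂ} (hW : MeasurableSet W) (L : ℝ) (c : ℂ) (s : ℝ) :
    Real.circleAverage (W.indicator fun _ => L) c s =
      L * volume.real (circleMap c s ⁻¹' W ∩ Ioo (-Real.pi) Real.pi) / (2 * Real.pi) := by
  have hpre : MeasurableSet (circleMap c s ⁻¹' W) := (continuous_circleMap c s).measurable hW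
  have hcomp : (fun θ => W.indicator (fun _ => L) (circleMap c s θ)) =
      (circleMap c s ⁻¹' W).indicator fun _ => L := rfl
  have hshift := (periodic_circleMap c s).comp (W.indicator fun _ => L)
    |>.intervalIntegral_add_eq 0 (-Real.pi)
  simp only [zero_add, Function.comp_def] at hshift
  rw [Real.circleAverage_def, hshift, hcomp, intervalIntegral.integral_of_le (by
    linarith [Real.pi_pos]), integral_Ioc_eq_integral_Ioo, integral_indicator_const _ hpre,
    measureReal_restrict_apply hpre, show -Real.pi + 2 * Real.pi = Real.pi by ring,
    smul_eq_mul, smul_eq_mul]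
  ring

lemma norm_le_exp_mul_arcLength {f : ℂ → ℂ} {c : ℂ} {s : ℝ} (hs : 0 < s)
    (hf : AnalyticOnNhd ℂ f (closedBall c s)) {W : Set ℂ} (hW : MeasurableSet W) {L : ℝ}
    (hL : 0 ≤ L) (hbad : ∀ z ∈ sphere c s, ‖f z‖ ≤ Real.exp L)
    (hgood : ∀ z ∈ sphere c s, z ∉ W → ‖f z‖ ≤ 1) :
    ‖f c‖ ≤ Real.exp
      (L * volume.real (circleMap c s ⁻¹' W ∩ Ioo (-Real.pi) Real.pi) / (2 * Real.pi)) := by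
  rcases eq_or_ne (f c) 0 with hc | hc
  · rw [hc, norm_zero]
    positivity
  rw [← Real.log_le_iff_le_exp (norm_pos_iff.2 hc), ← circleAverage_indicator_const hW]
  refine (log_norm_le_circleAverage_log_norm hs hf hc).trans (Real.circleAverage_mono ?_ ?_ ?_)
  · exact MeromorphicOn.circleIntegrable_log_norm_of_nonneg
      (fun z hz => (hf z (sphere_subset_closedBall hz)).meromorphicAt) hs.le
  · have hconst : IntervalIntegrable (fun _ => L) volume 0 (2 * Real.pi) :=
      intervalIntegrable_const
    refine hconst.mono_fun ?_ (ae_of_all _ fun θ => ?_)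
    · exact ((measurable_const.indicator hW).comp
        (continuous_circleMap c s).measurable).aestronglyMeasurable
    · exact norm_indicator_le_norm_self (fun _ => L) _
  · intro z hz
    rw [abs_of_pos hs] at hz
    by_cases hzW : z ∈ W
    · rw [indicator_of_mem hzW]
      rcases eq_or_ne (f z) 0 with h0 | h0
      · simpa [h0] using hL
      · exact (Real.log_le_iff_le_exp (norm_pos_iff.2 h0)).2 (hbad z hz)
    · rw [indicator_of_notMem hzW]
      exact Real.log_nonpos (norm_nonneg _) (hgood z hz hzW)

lemma volume_eq_lintegral_circleMap {W : Set ℂ} (hW : MeasurableSet W) (w : ℂ) :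
    volume W = ∫⁻ r in Ioi (0 : ℝ), ENNReal.ofReal r *
      volume (circleMap w r ⁻¹' W ∩ Ioo (-Real.pi) Real.pi) := by
  have hpolar (p : ℝ × ℝ) : w + Complex.polarCoord.symm p = circleMap w p.1 p.2 := by
    simp [Complex.polarCoord_symm_apply, circleMap, Complex.exp_mul_I]
  have hcont : Continuous fun p : ℝ × ℝ => circleMap w p.1 p.2 := by
    unfold circleMap
    fun_prop
  have hmeas : Measurable fun p : ℝ × ℝ =>
      ENNReal.ofReal p.1 • W.indicator (1 : ℂ → ENNReal) (circleMap w p.1 p.2) :=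
    (by fun_prop : Measurable fun p : ℝ × ℝ => ENNReal.ofReal p.1).mul
      ((measurable_one.indicator hW).comp hcont.measurable)
  have htarget : polarCoord.target = Ioi (0 : ℝ) ×ˢ Ioo (-Real.pi) Real.pi := rfl
  rw [← lintegral_indicator_one hW, ← lintegral_add_left_eq_self _ w,
    ← Complex.lintegral_comp_polarCoord_symm, htarget, Measure.volume_eq_prod,
    ← Measure.prod_restrict]
  simp_rw [hpolar]
  rw [lintegral_prod _ hmeas.aemeasurable]
  refine lintegral_congr fun r => ?_
  have hpre : MeasurableSet (circleMap w r ⁻¹' W) := (continuous_circleMap w r).measurable hW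
  have hind (θ : ℝ) : W.indicator (1 : ℂ → ENNReal) (circleMap w r θ) =
      (circleMap w r ⁻¹' W).indicator 1 θ := rfl
  simp_rw [hind, smul_eq_mul]
  rw [lintegral_const_mul _ (measurable_one.indicator hpre), lintegral_indicator_one hpre,
    Measure.restrict_apply hpre]

lemma exists_radius_arcLength_le {W : Set ℂ} (hW : MeasurableSet W) {t η : ℝ} (ht : 0 < t)
    (hη : 0 ≤ η) (w : ℂ) (hvol : volume W < ENNReal.ofReal (t / 2 * (t / 2) * η)) :
    ∃ s ∈ Ioo (t / 2) t,
      volume.real (circleMap w s ⁻¹' W ∩ Ioo (-Real.pi) Real.pi) ≤ η := by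
  by_contra! hlong
  refine hvol.not_ge ?_
  calc ENNReal.ofReal (t / 2 * (t / 2) * η)
      = ∫⁻ _ in Ioo (t / 2) t, ENNReal.ofReal (t / 2) * ENNReal.ofReal η := by
        rw [setLIntegral_const, Real.volume_Ioo, sub_half, mul_right_comm,
          ← ENNReal.ofReal_mul (by positivity), ← ENNReal.ofReal_mul (by positivity)]
    _ ≤ ∫⁻ r in Ioo (t / 2) t, ENNReal.ofReal r *
          volume (circleMap w r ⁻¹' W ∩ Ioo (-Real.pi) Real.pi) := by
        refine setLIntegral_mono' measurableSet_Ioo fun r hr => ?_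
        gcongr
        · exact hr.1.le
        · exact ENNReal.ofReal_le_of_le_toReal (hlong r hr).le
    _ ≤ ∫⁻ r in Ioi (0 : ℝ), ENNReal.ofReal r *
          volume (circleMap w r ⁻¹' W ∩ Ioo (-Real.pi) Real.pi) :=
        lintegral_mono_set fun r hr => (half_pos ht).trans hr.1
    _ = volume W := (volume_eq_lintegral_circleMap hW w).symm

lemma norm_le_exp_of_volume_lt {f : ℂ → ℂ} {w : ℂ} {t L η : ℝ} {W : Set ℂ} (ht : 0 < t)
    (hf : DifferentiableOn ℂ f (ball w t)) (hW : MeasurableSet W) (hη : 0 ≤ η)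
    (hvol : volume W < ENNReal.ofReal (t / 2 * (t / 2) * η)) (hL : 0 ≤ L)
    (hbad : ∀ z ∈ ball w t, ‖f z‖ ≤ Real.exp L) (hgood : ∀ z ∈ ball w t, z ∉ W → ‖f z‖ ≤ 1) :
    ‖f w‖ ≤ Real.exp (L * η / (2 * Real.pi)) := by
  obtain ⟨s, hs, harc⟩ := exists_radius_arcLength_le hW ht hη w hvol
  have hball : closedBall w s ⊆ ball w t := closedBall_subset_ball hs.2
  have hsphere : sphere w s ⊆ ball w t := sphere_subset_closedBall.trans hball
  refine (norm_le_exp_mul_arcLength ((half_pos ht).trans hs.1)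
    ((hf.analyticOnNhd isOpen_ball).mono hball) hW hL (fun z hz => hbad z (hsphere hz))
    fun z hz => hgood z (hsphere hz)).trans ?_
  gcongr

lemma tendsto_measure_setOf_exists_lt {X ι : Type*} [TopologicalSpace X] [MeasurableSpace X]
    [OpensMeasurableSpace X] {μ : Measure X} {S : Set X} (hS : IsOpen S) (hμS : μ S ≠ ⊤)
    {g : ι → X → ℝ} (hg : ∀ i, ContinuousOn (g i) S)
    (hbdd : ∀ x ∈ S, ∃ C, ∀ i, g i x ≤ C) :
    Tendsto (fun C : ℕ => μ {x ∈ S | ∃ i, C < g i x}) atTop (𝓝 0) := by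
  have hanti : Antitone fun C : ℕ => {x ∈ S | ∃ i, C < g i x} := fun C C' hC x hx =>
    ⟨hx.1, hx.2.imp fun i hi => lt_of_le_of_lt (Nat.cast_le.2 hC) hi⟩
  have hempty : ⋂ C : ℕ, {x ∈ S | ∃ i, C < g i x} = ∅ := by
    refine eq_empty_of_forall_notMem fun x hx => ?_
    rw [mem_iInter] at hx
    obtain ⟨C, hC⟩ := hbdd x (hx 0).1
    obtain ⟨n, hn⟩ := exists_nat_ge C
    obtain ⟨i, hi⟩ := (hx n).2
    linarith [hC i]
  rw [← measure_empty (μ := μ), ← hempty]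
  exact tendsto_measure_iInter_atTop
    (fun C => (isOpen_setOf_exists_lt hS hg C).measurableSet.nullMeasurableSet) hanti
    ⟨0, measure_ne_top_of_subset (sep_subset _ _) hμS⟩

/-- Hartogs' lemma: `‖f N‖ ≤ C` off a set of small measure, and around each `w` there is a circle
meeting that set in a short arc, so the mean value of `log ‖f N‖` over the circle trades the growth
rate `A` for `B`. -/
lemma exists_forall_norm_le_mul_pow_of_forall_bounded {f : ℕ → ℂ → ℂ} {c : ℂ} {t M A B : ℝ}
    (ht : 0 < t)
    (hf : ∀ N, DifferentiableOn ℂ (f N) (ball c (2 * t))) (hA : 1 < A) (hB : 1 < B)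
    (hunif : ∀ N, ∀ w ∈ ball c (2 * t), ‖f N w‖ ≤ M * A ^ N)
    (hbdd : ∀ w ∈ ball c (2 * t), ∃ C, ∀ N, ‖f N w‖ ≤ C) :
    ∃ C, ∀ w ∈ ball c t, ∀ N, ‖f N w‖ ≤ C * B ^ N := by
  have hlogA : 0 < Real.log A := Real.log_pos hA
  set η : ℝ := Real.log B * (2 * Real.pi) / Real.log A with hη
  have hη0 : 0 < η := div_pos (mul_pos (Real.log_pos hB) Real.two_pi_pos) hlogA
  have hnorm (N : ℕ) : ContinuousOn (fun w => ‖f N w‖) (ball c (2 * t)) :=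
    (hf N).continuousOn.norm
  obtain ⟨C, hvol, hC1, hCM⟩ := (((tendsto_measure_setOf_exists_lt (μ := volume)
    isOpen_ball measure_ball_lt_top.ne hnorm hbdd).eventually_lt_const
    (ENNReal.ofReal_pos.2 (by positivity : 0 < t / 2 * (t / 2) * η))).and
    ((eventually_ge_atTop 1).and (eventually_ge_atTop ⌈M⌉₊))).exists
  have hC0 : (0 : ℝ) < C := by exact_mod_cast hC1
  have hMC : M ≤ C := (Nat.le_ceil M).trans (by exact_mod_cast hCM)
  refine ⟨C, fun w hw N => ?_⟩
  have hball : ball w t ⊆ ball c (2 * t) := ball_subset_ball' (by linarith [mem_ball.1 hw])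
  have hscaled (z : ℂ) : ‖f N z / C‖ = ‖f N z‖ / C := by rw [norm_div, Complex.norm_natCast]
  have hcenter := norm_le_exp_of_volume_lt (f := fun z => f N z / C) (L := N * Real.log A) ht
    (((hf N).mono hball).div_const _) (isOpen_setOf_exists_lt isOpen_ball hnorm C).measurableSet
    hη0.le hvol (by positivity)
    (fun z hz => by
      rw [hscaled, div_le_iff₀ hC0, Real.exp_nat_mul, Real.exp_log (by linarith), mul_comm]
      exact (hunif N z (hball hz)).trans (by gcongr))
    (fun z hz hzbad => by
      rw [hscaled, div_le_one hC0]
      by_contra! hlt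
      exact hzbad ⟨hball hz, N, hlt⟩)
  have hexponent : N * Real.log A * η / (2 * Real.pi) = N * Real.log B := by
    rw [hη]
    field_simp
  rwa [hscaled, div_le_iff₀ hC0, hexponent, Real.exp_nat_mul, Real.exp_log (by linarith),
    mul_comm] at hcenter

lemma exists_forall_norm_le_mul_pow {f : ℕ → ℂ → ℂ} {c : ℂ} {t M a b B : ℝ} (ht : 0 < t)
    (hb : 0 < b) (hf : ∀ N, DifferentiableOn ℂ (f N) (ball c (2 * t))) (hba : b < a) (hbB : b < B)
    (hunif : ∀ N, ∀ w ∈ ball c (2 * t), ‖f N w‖ ≤ M * a ^ N)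
    (hpt : ∀ w ∈ ball c (2 * t), ∃ C, ∀ N, ‖f N w‖ ≤ C * b ^ N) :
    ∃ C, ∀ w ∈ ball c t, ∀ N, ‖f N w‖ ≤ C * B ^ N := by
  have hscaled (N : ℕ) (w : ℂ) : ‖f N w / (b : ℂ) ^ N‖ = ‖f N w‖ / b ^ N := by
    simp [abs_of_pos hb]
  obtain ⟨C, hC⟩ := exists_forall_norm_le_mul_pow_of_forall_bounded (M := M)
    (f := fun N w => f N w / (b : ℂ) ^ N) ht (fun N => (hf N).div_const _)
    ((one_lt_div hb).2 hba) ((one_lt_div hb).2 hbB)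
    (fun N w hw => by
      rw [hscaled, div_le_iff₀ (by positivity), mul_assoc, ← mul_pow, div_mul_cancel₀ _ hb.ne']
      exact hunif N w hw)
    fun w hw => (hpt w hw).imp fun C hC N => by
      rw [hscaled, div_le_iff₀ (by positivity)]
      exact hC N
  refine ⟨C, fun w hw N => ?_⟩
  have hCw := hC w hw N
  rwa [hscaled, div_le_iff₀ (by positivity), mul_assoc, ← mul_pow, div_mul_cancel₀ _ hb.ne']
    at hCw

lemma exists_isOpen_forall_le {X ι : Type*} [TopologicalSpace X] [BaireSpace X] {S : Set X}
    (hS : IsOpen S) (hne : S.Nonempty) {g : ι → X → ℝ} (hg : ∀ i, ContinuousOn (g i) S)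
    (hbdd : ∀ x ∈ S, ∃ C, ∀ i, g i x ≤ C) :
    ∃ V ⊆ S, IsOpen V ∧ V.Nonempty ∧ ∃ C, ∀ x ∈ V, ∀ i, g i x ≤ C := by
  have hclosed (n : ℕ) : IsClosed {x ∈ S | ∃ i, (n : ℝ) < g i x}ᶜ :=
    (isOpen_setOf_exists_lt hS hg n).isClosed_compl
  have hcover : ⋃ n : ℕ, {x ∈ S | ∃ i, (n : ℝ) < g i x}ᶜ = univ := by
    refine eq_univ_of_forall fun x => mem_iUnion.2 ?_
    by_cases hx : x ∈ S
    · obtain ⟨C, hC⟩ := hbdd x hx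
      obtain ⟨n, hn⟩ := exists_nat_ge C
      exact ⟨n, fun ⟨_, i, hi⟩ => (hi.trans_le (hC i)).not_ge hn⟩
    · exact ⟨0, fun h => hx h.1⟩
  obtain ⟨x, hxS, hx⟩ :=
    (dense_iUnion_interior_of_closed hclosed hcover).inter_open_nonempty S hS hne
  obtain ⟨n, hn⟩ := mem_iUnion.1 hx
  refine ⟨S ∩ interior _, inter_subset_left, hS.inter isOpen_interior, ⟨x, hxS, hn⟩, n,
    fun y hy i => ?_⟩
  by_contra! hlt
  exact interior_subset hy.2 ⟨hy.1, i, hlt⟩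

section NewtonInterpolation

lemma norm_dslope_le {Ω : Set ℂ} (hΩ : IsOpen Ω) {c a : ℂ} {R ρ M : ℝ}
    (hR : closedBall c R ⊆ Ω) (hρ : ρ < R) (ha : a ∈ ball c ρ) {h : ℂ → ℂ}
    (hh : DifferentiableOn ℂ h Ω) (hM : ∀ z ∈ closedBall c R, ‖h z‖ ≤ M) {z : ℂ}
    (hz : z ∈ closedBall c R) : ‖dslope h a z‖ ≤ M * (2 / (R - ρ)) := by
  have haR : a ∈ closedBall c R := closedBall_subset_closedBall hρ.le (ball_subset_closedBall ha)
  have hR0 : R ≠ 0 := ((pos_of_mem_ball ha).trans hρ).ne'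
  refine Complex.norm_le_of_forall_mem_frontier_norm_le (U := ball c R) isBounded_ball
    (DifferentiableOn.diffContOnCl ?_) (fun y hy => ?_) (by rwa [closure_ball _ hR0])
  · rw [closure_ball _ hR0]
    exact ((Complex.differentiableOn_dslope (hΩ.mem_nhds (hR haR))).2 hh).mono hR
  · rw [frontier_ball _ hR0] at hy
    have hdist : R - ρ ≤ ‖y - a‖ := by
      rw [← dist_eq_norm]
      linarith [dist_triangle y a c, mem_sphere.1 hy, mem_ball.1 ha]
    have hdiff : ‖y - a‖ * ‖dslope h a y‖ ≤ 2 * M := by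
      rw [← norm_smul, sub_smul_dslope]
      linarith [norm_sub_le (h y) (h a), hM y (sphere_subset_closedBall hy), hM a haR]
    rw [mul_div_left_comm, ← mul_div_assoc, le_div_iff₀ (sub_pos.2 hρ), mul_comm]
    exact (mul_le_mul_of_nonneg_right hdist (norm_nonneg _)).trans hdiff

/-- The iterated difference quotient `z ↦ h[x 0, …, x (k - 1), z]`. Being built from `dslope`, it
remains holomorphic at the nodes. -/
noncomputable def iteratedDSlope (x : ℕ → ℂ) (h : ℂ → ℂ) : ℕ → ℂ → ℂ
  | 0 => h
  | k + 1 => dslope (iteratedDSlope x h k) (x k)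

/-- The divided difference `h ↦ h[x 0, …, x (k - 1), y]` as a formal combination of points, so that
it can be applied to functions through `Finsupp.linearCombination` and to kernels through their
sesquilinear form. -/
noncomputable def dividedDifference (x : ℕ → ℂ) : ℕ → ℂ → ℂ →₀ ℂ
  | 0, y => Finsupp.single y 1
  | k + 1, y => (y - x k)⁻¹ • (dividedDifference x k y - dividedDifference x k (x k))

/-- The formal combination of nodes that sends `h` to the value at `z` of its Newton interpolation
polynomial at `x 0, …, x (N - 1)`. -/
noncomputable def newtonInterpolant (x : ℕ → ℂ) (N : ℕ) (z : ℂ) : ℂ →₀ ℂ :=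
  ∑ k ∈ Finset.range N, (∏ j ∈ Finset.range k, (z - x j)) • dividedDifference x k (x k)

variable {x : ℕ → ℂ}

lemma dividedDifference_mem_supported {U : Set ℂ} (hx : ∀ k, x k ∈ U) (k : ℕ) {y : ℂ}
    (hy : y ∈ U) : dividedDifference x k y ∈ Finsupp.supported ℂ ℂ U := by
  induction k generalizing y with
  | zero => exact Finsupp.single_mem_supported ℂ 1 hy
  | succ k ih => exact Submodule.smul_mem _ _ (Submodule.sub_mem _ (ih hy) (ih (hx k)))

lemma newtonInterpolant_mem_supported {U : Set ℂ} (hx : ∀ k, x k ∈ U) (N : ℕ) (z : ℂ) :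
    newtonInterpolant x N z ∈ Finsupp.supported ℂ ℂ U :=
  Submodule.sum_mem _ fun k _ =>
    Submodule.smul_mem _ _ (dividedDifference_mem_supported hx k (hx k))

lemma linearCombination_dividedDifference (hx : Function.Injective x) (h : ℂ → ℂ) (k : ℕ) {y : ℂ}
    (hy : ∀ j < k, y ≠ x j) :
    Finsupp.linearCombination ℂ h (dividedDifference x k y) = iteratedDSlope x h k y := by
  induction k generalizing y with
  | zero => simp [dividedDifference, iteratedDSlope]
  | succ k ih =>
    rw [dividedDifference, iteratedDSlope, dslope_of_ne _ (hy k k.lt_succ_self), slope_def_module,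
      map_smul, map_sub, ih fun j hj => hy j (hj.trans k.lt_succ_self),
      ih fun j hj => hx.ne hj.ne']

lemma linearCombination_newtonInterpolant (hx : Function.Injective x) (h : ℂ → ℂ) (N : ℕ)
    (z : ℂ) : Finsupp.linearCombination ℂ h (newtonInterpolant x N z) =
      ∑ k ∈ Finset.range N, (∏ j ∈ Finset.range k, (z - x j)) * iteratedDSlope x h k (x k) := by
  rw [newtonInterpolant, map_sum]
  refine Finset.sum_congr rfl fun k _ => ?_
  rw [map_smul, linearCombination_dividedDifference hx h k fun j hj => hx.ne hj.ne', smul_eq_mul]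

lemma sub_linearCombination_newtonInterpolant (hx : Function.Injective x) (h : ℂ → ℂ) (N : ℕ)
    (z : ℂ) : h z - Finsupp.linearCombination ℂ h (newtonInterpolant x N z) =
      (∏ j ∈ Finset.range N, (z - x j)) * iteratedDSlope x h N z := by
  rw [linearCombination_newtonInterpolant hx]
  induction N with
  | zero => simp [iteratedDSlope]
  | succ N ih =>
    have hslope : (z - x N) * iteratedDSlope x h (N + 1) z = _ :=
      sub_smul_dslope (iteratedDSlope x h N) (x N) z
    rw [Finset.sum_range_succ, Finset.prod_range_succ]
    linear_combination ih - (∏ j ∈ Finset.range N, (z - x j)) * hslope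

variable {Ω : Set ℂ} {c : ℂ} {t : ℝ} {h : ℂ → ℂ} {M : ℝ}

lemma differentiableOn_iteratedDSlope (hΩ : IsOpen Ω) (hx : ∀ k, x k ∈ Ω)
    (hh : DifferentiableOn ℂ h Ω) (k : ℕ) : DifferentiableOn ℂ (iteratedDSlope x h k) Ω := by
  induction k with
  | zero => exact hh
  | succ k ih => exact (Complex.differentiableOn_dslope (hΩ.mem_nhds (hx k))).2 ih

-- The radius `9 * t` makes `2 / (9 * t - t) = 1 / (4 * t)`, which beats the factor `2 * t` that
-- each node contributes to the interpolation error.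
lemma norm_iteratedDSlope_le (hΩ : IsOpen Ω) (hR : closedBall c (9 * t) ⊆ Ω)
    (hx : ∀ k, x k ∈ ball c t) (hh : DifferentiableOn ℂ h Ω)
    (hM : ∀ z ∈ closedBall c (9 * t), ‖h z‖ ≤ M) (k : ℕ) {z : ℂ}
    (hz : z ∈ closedBall c (9 * t)) : ‖iteratedDSlope x h k z‖ ≤ M * (1 / (4 * t)) ^ k := by
  have ht : 0 < t := pos_of_mem_ball (hx 0)
  have hxΩ (k : ℕ) : x k ∈ Ω := hR (ball_subset_closedBall (ball_subset_ball (by linarith) (hx k)))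
  induction k generalizing z with
  | zero => simpa [iteratedDSlope] using hM z hz
  | succ k ih =>
    refine (norm_dslope_le hΩ hR (by linarith) (hx k)
      (differentiableOn_iteratedDSlope hΩ hxΩ hh k) (fun z hz => ih hz) hz).trans_eq ?_
    rw [pow_succ, ← mul_assoc]
    congr 1
    field_simp
    norm_num

lemma norm_prod_sub_le (hx : ∀ k, x k ∈ ball c t) {z : ℂ} (hz : z ∈ ball c t) (N : ℕ) :
    ‖∏ j ∈ Finset.range N, (z - x j)‖ ≤ (2 * t) ^ N := by
  calc ‖∏ j ∈ Finset.range N, (z - x j)‖ = ∏ j ∈ Finset.range N, ‖z - x j‖ := norm_prod _ _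
    _ ≤ ∏ _j ∈ Finset.range N, 2 * t := by
        refine Finset.prod_le_prod (fun _ _ => norm_nonneg _) fun j _ => ?_
        rw [← dist_eq_norm]
        linarith [dist_triangle_right z (x j) c, mem_ball.1 (hx j), mem_ball.1 hz]
    _ = (2 * t) ^ N := by simp

lemma norm_sub_linearCombination_newtonInterpolant_le (hΩ : IsOpen Ω)
    (hR : closedBall c (9 * t) ⊆ Ω) (hx : ∀ k, x k ∈ ball c t) (hxi : Function.Injective x)
    (hh : DifferentiableOn ℂ h Ω) (hM : ∀ z ∈ closedBall c (9 * t), ‖h z‖ ≤ M) (N : ℕ) {z : ℂ}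
    (hz : z ∈ ball c t) :
    ‖h z - Finsupp.linearCombination ℂ h (newtonInterpolant x N z)‖ ≤ M * (1 / 2) ^ N := by
  have ht : 0 < t := pos_of_mem_ball hz
  rw [sub_linearCombination_newtonInterpolant hxi, norm_mul]
  calc _ ≤ (2 * t) ^ N * (M * (1 / (4 * t)) ^ N) :=
        mul_le_mul (norm_prod_sub_le hx hz N) (norm_iteratedDSlope_le hΩ hR hx hh hM N
          (ball_subset_closedBall (ball_subset_ball (by linarith) hz))) (norm_nonneg _)
          (by positivity)
    _ = M * (1 / 2) ^ N := by
        rw [mul_left_comm, ← mul_pow]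
        congr 2
        field_simp
        norm_num

end NewtonInterpolation

section KernelForm

variable {X : Type*}

/-- The pointwise complex conjugate of a finitely supported function. -/
noncomputable def conjFinsupp : (X →₀ ℂ) →ₗ⋆[ℂ] X →₀ ℂ :=
  Finsupp.mapRange.linearMap (starLinearEquiv ℂ : ℂ ≃ₗ⋆[ℂ] ℂ).toLinearMap

/-- The section `∑ y, f y • K(·, y)` of the kernel `K` along `f`, a function on `X`. -/
noncomputable def kerSection (K : X → X → ℂ) : (X →₀ ℂ) →ₗ[ℂ] X → ℂ :=
  Finsupp.linearCombination ℂ fun y x => K x y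

/-- The inner product `[f, g]_K` as a sesquilinear map: the section of `K` along `f` is paired with
the conjugate of `g`. -/
noncomputable def kerForm (K : X → X → ℂ) : (X →₀ ℂ) →ₗ[ℂ] (X →₀ ℂ) →ₗ⋆[ℂ] ℂ :=
  LinearMap.mk₂'ₛₗ (RingHom.id ℂ) (starRingEnd ℂ)
    (fun f g => Finsupp.linearCombination ℂ (kerSection K f) (conjFinsupp g))
    (fun f₁ f₂ g => by simp [Finsupp.linearCombination_apply, mul_add])
    (fun a f g => by simp [Finsupp.linearCombination_apply, Finsupp.mul_sum, mul_left_comm])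
    (fun f g₁ g₂ => by simp)
    (fun a f g => by simp)

@[simp]
lemma conjFinsupp_apply (f : X →₀ ℂ) (x : X) : conjFinsupp f x = starRingEnd ℂ (f x) := rfl

@[simp]
lemma conjFinsupp_conjFinsupp (f : X →₀ ℂ) : conjFinsupp (conjFinsupp f) = f := by
  ext x
  simp

lemma conjFinsupp_mem_supported {U : Set X} {f : X →₀ ℂ} (hf : f ∈ Finsupp.supported ℂ ℂ U) :
    conjFinsupp f ∈ Finsupp.supported ℂ ℂ U :=
  (Finset.coe_subset.2 (Finsupp.support_mapRange (hf := map_zero _))).trans hf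

lemma conj_linearCombination (h : X → ℂ) (f : X →₀ ℂ) :
    starRingEnd ℂ (Finsupp.linearCombination ℂ h f) =
      Finsupp.linearCombination ℂ (fun x => starRingEnd ℂ (h x)) (conjFinsupp f) := by
  induction f using Finsupp.induction_linear with
  | zero => simp
  | add f g hf hg => simp only [map_add, hf, hg]
  | single x a =>
    have hsingle : conjFinsupp (Finsupp.single x a) = Finsupp.single x (starRingEnd ℂ a) :=
      Finsupp.mapRange_single (hf := map_zero _)
    simp [hsingle]

lemma kerSection_apply (K : X → X → ℂ) (f : X →₀ ℂ) (x : X) :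
    kerSection K f x = Finsupp.linearCombination ℂ (K x) f := by
  simp [kerSection, Finsupp.linearCombination_apply, Finsupp.sum, Finset.sum_apply]

lemma kerForm_apply (K : X → X → ℂ) (f g : X →₀ ℂ) :
    kerForm K f g = Finsupp.linearCombination ℂ (kerSection K f) (conjFinsupp g) := rfl

lemma kerIP_eq_kerForm (K : X → X → ℂ) (f g : X →₀ ℂ) : kerIP K f g = kerForm K f g := by
  have hsum : kerForm K f g = g.sum fun x b => starRingEnd ℂ b * kerSection K f x :=
    Finsupp.sum_mapRange_index (hf := map_zero _) (by simp)
  simp only [hsum, Finsupp.sum, kerIP, kerSection_apply, Finsupp.linearCombination_apply,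
    Finset.mul_sum, smul_eq_mul]
  exact Finset.sum_congr rfl fun x _ => Finset.sum_congr rfl fun y _ => by ring

lemma conj_kerForm {K : X → X → ℂ} {U : Set X}
    (hK : ∀ x ∈ U, ∀ y ∈ U, K x y = starRingEnd ℂ (K y x)) {f g : X →₀ ℂ}
    (hf : f ∈ Finsupp.supported ℂ ℂ U) (hg : g ∈ Finsupp.supported ℂ ℂ U) :
    starRingEnd ℂ (kerForm K f g) = kerForm K g f := by
  simp only [← kerIP_eq_kerForm, kerIP, map_sum, map_mul, Complex.conj_conj]
  rw [Finset.sum_comm]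
  refine Finset.sum_congr rfl fun y hy => Finset.sum_congr rfl fun x hx => ?_
  rw [← hK y (hf hy) x (hg hx)]
  ring

lemma norm_kerSection_eq {K : X → X → ℂ} {U : Set X}
    (hK : ∀ x ∈ U, ∀ y ∈ U, K x y = starRingEnd ℂ (K y x)) {f : X →₀ ℂ}
    (hf : f ∈ Finsupp.supported ℂ ℂ U) {x : X} (hx : x ∈ U) :
    ‖kerSection K f x‖ = ‖Finsupp.linearCombination ℂ (fun y => K y x) (conjFinsupp f)‖ := by
  rw [← RCLike.norm_conj, kerSection_apply, conj_linearCombination]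
  congr 1
  refine Finsupp.sum_congr fun y hy => congrArg (conjFinsupp f y * ·) ?_
  exact (hK y (conjFinsupp_mem_supported hf hy) x hx).symm

lemma kerForm_mapDomain {U : Set X} (K : X → X → ℂ) (f g : U →₀ ℂ) :
    kerForm K (f.mapDomain Subtype.val) (g.mapDomain Subtype.val) =
      kerForm (fun z w : U => K z w) f g := by
  have hconj : conjFinsupp (g.mapDomain Subtype.val) = (conjFinsupp g).mapDomain Subtype.val :=
    (Finsupp.mapDomain_mapRange _ _ _ (map_zero _) (map_add _)).symm
  rw [kerForm_apply, hconj, Finsupp.linearCombination_mapDomain, kerForm_apply]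
  congr 2
  ext x
  simp [kerSection_apply, Finsupp.linearCombination_mapDomain, Function.comp_def]

end KernelForm

section NegativeFamilies

variable {V : Type*} [AddCommGroup V] [Module ℂ V]

/-- The vectors `F i` are linearly independent and span a subspace on which the form `B` is
negative. Only the real part of `B u u` is constrained, so that the condition is stable under
perturbation; for a Hermitian form `B u u` is real anyway. -/
def IsNegFamily (B : V →ₗ[ℂ] V →ₗ⋆[ℂ] ℂ) {n : ℕ} (F : Fin n → V) : Prop :=
  ∀ c : Fin n → ℂ, c ≠ 0 → (B (∑ i, c i • F i) (∑ i, c i • F i)).re < 0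

lemma sesq_sum_smul (B : V →ₗ[ℂ] V →ₗ⋆[ℂ] ℂ) {n : ℕ} (F : Fin n → V) (c : Fin n → ℂ) :
    B (∑ i, c i • F i) (∑ i, c i • F i) =
      ∑ i, ∑ j, c i * starRingEnd ℂ (c j) * B (F i) (F j) := by
  simp only [map_sum, LinearMap.sum_apply, map_smulₛₗ, LinearMap.smul_apply, smul_eq_mul,
    RingHom.id_apply, Finset.mul_sum]
  rw [Finset.sum_comm]
  exact Finset.sum_congr rfl fun i _ => Finset.sum_congr rfl fun j _ => by ring

lemma IsNegFamily.eventually {B : V →ₗ[ℂ] V →ₗ⋆[ℂ] ℂ} {n : ℕ} {F : Fin n → V}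
    (hF : IsNegFamily B F) {ι : Type*} {l : Filter ι} {G : ι → Fin n → V}
    (hG : ∀ i j, Tendsto (fun N => B (G N i) (G N j)) l (𝓝 (B (F i) (F j)))) :
    ∀ᶠ N in l, IsNegFamily B (G N) := by
  let Q (A : Fin n → Fin n → ℂ) (c : Fin n → ℂ) : ℝ :=
    (∑ i, ∑ j, c i * starRingEnd ℂ (c j) * A i j).re
  have hQ : Continuous fun p : (Fin n → Fin n → ℂ) × (Fin n → ℂ) => Q p.1 p.2 := by
    refine Complex.continuous_re.comp (continuous_finsetSum _ fun i _ =>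
      continuous_finsetSum _ fun j _ => .mul (.mul (by fun_prop) ?_) (by fun_prop))
    exact Complex.continuous_conj.comp (by fun_prop)
  have hsphere : ∀ᶠ A in 𝓝 fun i j => B (F i) (F j), ∀ c ∈ sphere (0 : Fin n → ℂ) 1, Q A c < 0 := by
    refine (isCompact_sphere _ _).eventually_forall_of_forall_eventually fun c hc => ?_
    refine hQ.continuousAt.eventually_lt_const ?_
    simpa only [Q, sesq_sum_smul] using hF c (ne_of_mem_sphere hc one_ne_zero)
  have hGram : Tendsto (fun N i j => B (G N i) (G N j)) l (𝓝 fun i j => B (F i) (F j)) :=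
    tendsto_pi_nhds.2 fun i => tendsto_pi_nhds.2 fun j => hG i j
  filter_upwards [hGram.eventually hsphere] with N hN c hc
  have hc0 : 0 < ‖c‖ := norm_pos_iff.2 hc
  have hunit := hN ((‖c‖ : ℂ)⁻¹ • c) (by simp [norm_smul, hc0.ne'])
  have hscale : B (∑ i, ((‖c‖ : ℂ)⁻¹ • c) i • G N i) (∑ i, ((‖c‖ : ℂ)⁻¹ • c) i • G N i) =
      (‖c‖⁻¹ ^ 2 : ℝ) * B (∑ i, c i • G N i) (∑ i, c i • G N i) := by
    simp only [Pi.smul_apply, smul_eq_mul, mul_smul, ← Finset.smul_sum]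
    rw [map_smulₛₗ, map_smulₛₗ, LinearMap.smul_apply, smul_eq_mul, smul_eq_mul, RingHom.id_apply,
      map_inv₀, Complex.conj_ofReal]
    push_cast
    ring
  simp only [Q, ← sesq_sum_smul, hscale, Complex.re_ofReal_mul] at hunit
  exact (pos_iff_neg_of_mul_neg hunit).1 (by positivity)

lemma natCast_le_toENat_rank_iff (N : Submodule ℂ V) (n : ℕ) :
    (n : ℕ∞) ≤ (Module.rank ℂ N).toENat ↔
      ∃ v : Fin n → V, (∀ i, v i ∈ N) ∧ LinearIndependent ℂ v := by
  rw [Cardinal.natCast_le_toENat, Module.le_rank_iff]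
  constructor
  · rintro ⟨v, hv⟩
    exact ⟨fun i => v i, fun i => (v i).2, hv.map' N.subtype (Submodule.ker_subtype N)⟩
  · rintro ⟨v, hvN, hv⟩
    exact ⟨fun i => ⟨v i, hvN i⟩, LinearIndependent.of_comp N.subtype hv⟩

lemma IsNegFamily.linearIndependent {B : V →ₗ[ℂ] V →ₗ⋆[ℂ] ℂ} {n : ℕ} {F : Fin n → V}
    (hF : IsNegFamily B F) : LinearIndependent ℂ F := by
  rw [Fintype.linearIndependent_iff]
  intro c hc
  by_contra! hne
  obtain ⟨i, hi⟩ := hne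
  have hneg := hF c fun h => hi (congrFun h i)
  simp [hc] at hneg

end NegativeFamilies

section NegativeSignature

variable {X : Type*}

lemma natCast_le_negSig_iff_exists_submodule (K : X → X → ℂ) (n : ℕ) :
    (n : ℕ∞) ≤ negSig K ↔ ∃ N : Submodule ℂ (X →₀ ℂ),
      (∀ f ∈ N, f ≠ 0 → kerIP K f f < 0) ∧ (n : ℕ∞) ≤ (Module.rank ℂ N).toENat := by
  rcases n with _ | n
  · simp only [Nat.cast_zero, zero_le, and_true, true_iff]
    exact ⟨⊥, fun f hf hf0 => (hf0 hf).elim⟩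
  · simp only [Nat.cast_add, Nat.cast_one, ENat.add_one_le_iff (ENat.natCast_ne_top n), negSig]
    exact lt_biSup_iff

lemma kerIP_self_neg_iff {K : X → X → ℂ} (hK : ∀ x y, K x y = starRingEnd ℂ (K y x))
    (f : X →₀ ℂ) : kerIP K f f < 0 ↔ (kerForm K f f).re < 0 := by
  have hreal : starRingEnd ℂ (kerForm K f f) = kerForm K f f :=
    conj_kerForm (U := univ) (fun x _ y _ => hK x y) (by simp) (by simp)
  rw [kerIP_eq_kerForm, Complex.lt_def]
  simp [Complex.conj_eq_iff_im.1 hreal]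

lemma natCast_le_negSig_iff {K : X → X → ℂ} (hK : ∀ x y, K x y = starRingEnd ℂ (K y x)) (n : ℕ) :
    (n : ℕ∞) ≤ negSig K ↔ ∃ F : Fin n → X →₀ ℂ, IsNegFamily (kerForm K) F := by
  simp only [natCast_le_negSig_iff_exists_submodule, natCast_le_toENat_rank_iff,
    kerIP_self_neg_iff hK]
  constructor
  · rintro ⟨N, hN, F, hFN, hF⟩
    refine ⟨F, fun c hc => hN _ (N.sum_mem fun i _ => N.smul_mem _ (hFN i)) fun h0 => hc ?_⟩
    exact funext (Fintype.linearIndependent_iff.1 hF c h0)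
  · rintro ⟨F, hF⟩
    refine ⟨Submodule.span ℂ (range F), fun f hf hf0 => ?_, F,
      fun i => Submodule.subset_span (mem_range_self i), hF.linearIndependent⟩
    obtain ⟨c, rfl⟩ := (Submodule.mem_span_range_iff_exists_fun ℂ).1 hf
    refine hF c ?_
    rintro rfl
    simp at hf0

/-- `U` carries `n` linearly independent finitely supported functions spanning a subspace on which
`[·,·]_K` is negative; for `K` Hermitian on `U` this says `n ≤ κ₋(K|U)`. -/
def HasNegFamily (K : X → X → ℂ) (U : Set X) (n : ℕ) : Prop :=
  ∃ F : Fin n → X →₀ ℂ, (∀ i, F i ∈ Finsupp.supported ℂ ℂ U) ∧ IsNegFamily (kerForm K) F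

lemma HasNegFamily.mono {K : X → X → ℂ} {U U' : Set X} (hU : U ⊆ U') {n : ℕ}
    (h : HasNegFamily K U n) : HasNegFamily K U' n := by
  obtain ⟨F, hFU, hF⟩ := h
  exact ⟨F, fun i => Finsupp.supported_mono hU (hFU i), hF⟩

lemma isNegFamily_mapDomain_iff {U : Set X} (K : X → X → ℂ) {n : ℕ} (F : Fin n → U →₀ ℂ) :
    IsNegFamily (kerForm K) (fun i => (F i).mapDomain Subtype.val) ↔
      IsNegFamily (kerForm fun z w : U => K z w) F := by
  have hsum (c : Fin n → ℂ) : ∑ i, c i • (F i).mapDomain Subtype.val =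
      (∑ i, c i • F i).mapDomain Subtype.val := by
    simp only [Finsupp.mapDomain_finsetSum, Finsupp.mapDomain_smul]
  simp only [IsNegFamily, hsum, kerForm_mapDomain]

lemma natCast_le_negSig_restrict_iff {K : X → X → ℂ} {U : Set X}
    (hK : ∀ x ∈ U, ∀ y ∈ U, K x y = starRingEnd ℂ (K y x)) (n : ℕ) :
    (n : ℕ∞) ≤ negSig (fun z w : U => K z w) ↔ HasNegFamily K U n := by
  rw [natCast_le_negSig_iff fun x y : U => hK x x.2 y y.2]
  constructor
  · rintro ⟨F, hF⟩
    exact ⟨_, fun i => Finsupp.supported_comap_lmapDomain ℂ ℂ Subtype.val U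
      (by simp), (isNegFamily_mapDomain_iff K F).2 hF⟩
  · rintro ⟨F, hFU, hF⟩
    have hpull (i : Fin n) : ∃ f : U →₀ ℂ, f.mapDomain Subtype.val = F i :=
      ⟨_, Finsupp.mapDomain_comapDomain _ Subtype.val_injective _
        (by simpa [Finsupp.mem_supported] using hFU i)⟩
    choose f hf using hpull
    refine ⟨f, (isNegFamily_mapDomain_iff K f).1 ?_⟩
    simpa only [hf] using hF

end NegativeSignature

/-- A kernel that on `Ω × Ω` is Hermitian and holomorphic in the first variable. -/
structure IsHolomorphicHermitianOn (K : ℂ → ℂ → ℂ) (Ω : Set ℂ) : Prop where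
  hermitian : ∀ z ∈ Ω, ∀ w ∈ Ω, K z w = starRingEnd ℂ (K w z)
  differentiableOn : ∀ w ∈ Ω, DifferentiableOn ℂ (fun z => K z w) Ω

section LocalBoundedness

variable {Ω : Set ℂ} {K : ℂ → ℂ → ℂ}

lemma exists_injective_forall_mem_of_isOpen {S : Set ℂ} (hS : IsOpen S) (hne : S.Nonempty) :
    ∃ x : ℕ → ℂ, Function.Injective x ∧ ∀ k, x k ∈ S := by
  obtain ⟨a, ha⟩ := hne
  have hinf : S.Infinite := infinite_of_mem_nhds a (hS.mem_nhds ha)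
  exact ⟨fun k => hinf.natEmbedding S k,
    Subtype.val_injective.comp (hinf.natEmbedding S).injective, fun k => (hinf.natEmbedding S k).2⟩

lemma tendsto_linearCombination_newtonInterpolant {x : ℕ → ℂ} (hΩ : IsOpen Ω) {c : ℂ} {t : ℝ}
    (hR : closedBall c (9 * t) ⊆ Ω) (hx : ∀ k, x k ∈ ball c t) (hxi : Function.Injective x)
    {h : ℂ → ℂ} (hh : DifferentiableOn ℂ h Ω) {z : ℂ} (hz : z ∈ ball c t) :
    Tendsto (fun N => Finsupp.linearCombination ℂ h (newtonInterpolant x N z)) atTop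
      (𝓝 (h z)) := by
  obtain ⟨M, hM⟩ := (isCompact_closedBall c (9 * t)).exists_bound_of_continuousOn
    (hh.continuousOn.mono hR)
  have hpow : Tendsto (fun N : ℕ => M * (1 / 2) ^ N) atTop (𝓝 (M * 0)) :=
    (tendsto_pow_atTop_nhds_zero_of_lt_one (by norm_num) (by norm_num)).const_mul M
  rw [mul_zero] at hpow
  refine tendsto_iff_norm_sub_tendsto_zero.2 (squeeze_zero (fun _ => norm_nonneg _) (fun N => ?_)
    hpow)
  rw [norm_sub_rev]
  exact norm_sub_linearCombination_newtonInterpolant_le hΩ hR hx hxi hh hM N hz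

lemma norm_le_of_forall_norm_iteratedDSlope_le {x : ℕ → ℂ} (hΩ : IsOpen Ω) {c : ℂ} {t C : ℝ}
    (hR : closedBall c (9 * t) ⊆ Ω) (hx : ∀ k, x k ∈ ball c t) (hxi : Function.Injective x)
    {h : ℂ → ℂ} (hh : DifferentiableOn ℂ h Ω)
    (hC : ∀ N, ‖iteratedDSlope x h N (x N)‖ ≤ C * (3 / (8 * t)) ^ N) {z : ℂ}
    (hz : z ∈ ball c t) : ‖h z‖ ≤ C * 4 := by
  have ht : 0 < t := pos_of_mem_ball hz
  have hC0 : 0 ≤ C := by simpa using (norm_nonneg _).trans (hC 0)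
  refine le_of_tendsto'
    (tendsto_linearCombination_newtonInterpolant hΩ hR hx hxi hh hz).norm fun N => ?_
  rw [linearCombination_newtonInterpolant hxi]
  calc _ ≤ ∑ k ∈ Finset.range N, C * (3 / 4 : ℝ) ^ k := by
        refine norm_sum_le_of_le _ fun k _ => ?_
        rw [norm_mul]
        refine (mul_le_mul (norm_prod_sub_le hx hz k) (hC k) (norm_nonneg _)
          (by positivity)).trans_eq ?_
        rw [mul_left_comm, ← mul_pow]
        congr 2
        field_simp
        norm_num
    _ = C * ∑ k ∈ Finset.range N, (3 / 4 : ℝ) ^ k := (Finset.mul_sum _ _ _).symm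
    _ ≤ C * 4 := by
        gcongr
        rw [geom_sum_eq (by norm_num), div_le_iff_of_neg (by norm_num)]
        linarith [pow_nonneg (by norm_num : (0 : ℝ) ≤ 3 / 4) N]

namespace IsHolomorphicHermitianOn

lemma differentiableOn_kerSection (hK : IsHolomorphicHermitianOn K Ω) {f : ℂ →₀ ℂ}
    (hf : f ∈ Finsupp.supported ℂ ℂ Ω) : DifferentiableOn ℂ (kerSection K f) Ω := by
  refine DifferentiableOn.congr (f := fun z => ∑ y ∈ f.support, f y * K z y) ?_
    fun z _ => kerSection_apply K f z
  exact .fun_sum fun y hy => (hK.differentiableOn y (hf hy)).const_mul _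

lemma norm_comm (hK : IsHolomorphicHermitianOn K Ω) {z w : ℂ} (hz : z ∈ Ω) (hw : w ∈ Ω) :
    ‖K z w‖ = ‖K w z‖ := by
  rw [hK.hermitian z hz w hw, RCLike.norm_conj]

lemma exists_forall_norm_le (hK : IsHolomorphicHermitianOn K Ω) {D : Set ℂ} (hD : IsCompact D)
    (hDΩ : D ⊆ Ω) {w : ℂ} (hw : w ∈ Ω) : ∃ C, ∀ z ∈ D, ‖K z w‖ ≤ C :=
  hD.exists_bound_of_continuousOn ((hK.differentiableOn w hw).continuousOn.mono hDΩ)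

lemma exists_isOpen_forall_norm_le (hK : IsHolomorphicHermitianOn K Ω) {D S : Set ℂ}
    (hD : IsCompact D) (hDΩ : D ⊆ Ω) (hS : IsOpen S) (hne : S.Nonempty) (hSΩ : S ⊆ Ω) :
    ∃ V ⊆ S, IsOpen V ∧ V.Nonempty ∧ ∃ C, ∀ z ∈ V, ∀ w ∈ D, ‖K z w‖ ≤ C := by
  obtain ⟨V, hVS, hV, hVne, C, hC⟩ := exists_isOpen_forall_le hS hne
    (g := fun (w : D) z => ‖K z w‖)
    (fun w => (hK.differentiableOn w (hDΩ w.2)).continuousOn.norm.mono hSΩ) fun z hz => by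
      obtain ⟨C, hC⟩ := hK.exists_forall_norm_le hD hDΩ (hSΩ hz)
      exact ⟨C, fun w => (hK.norm_comm (hSΩ hz) (hDΩ w.2)).trans_le (hC w w.2)⟩
  exact ⟨V, hVS, hV, hVne, C, fun z hz w hw => hC z hz ⟨w, hw⟩⟩

lemma norm_kerSection_conjFinsupp_dividedDifference (hK : IsHolomorphicHermitianOn K Ω)
    {x : ℕ → ℂ} (hx : ∀ k, x k ∈ Ω) (hxi : Function.Injective x) (N : ℕ) {w : ℂ} (hw : w ∈ Ω) :
    ‖kerSection K (conjFinsupp (dividedDifference x N (x N))) w‖ =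
      ‖iteratedDSlope x (fun z => K z w) N (x N)‖ := by
  rw [norm_kerSection_eq hK.hermitian
    (conjFinsupp_mem_supported (dividedDifference_mem_supported hx N (hx N))) hw,
    conjFinsupp_conjFinsupp, linearCombination_dividedDifference hxi _ _ fun j hj => hxi.ne hj.ne']

lemma exists_forall_norm_iteratedDSlope_le (hΩ : IsOpen Ω) (hK : IsHolomorphicHermitianOn K Ω)
    {c c' : ℂ} {t t' M : ℝ} (hR : closedBall c (9 * t) ⊆ Ω) (hR' : closedBall c' (9 * t') ⊆ Ω)
    {x : ℕ → ℂ} (hx : ∀ k, x k ∈ ball c t) (hx' : ∀ k, x k ∈ ball c' t')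
    (hxi : Function.Injective x)
    (hM : ∀ z ∈ closedBall c' (9 * t'), ∀ w ∈ ball c (2 * t), ‖K z w‖ ≤ M) :
    ∃ C, ∀ w ∈ ball c t, ∀ N,
      ‖iteratedDSlope x (fun z => K z w) N (x N)‖ ≤ C * (3 / (8 * t)) ^ N := by
  have ht : 0 < t := pos_of_mem_ball (hx 0)
  have ht' : 0 < t' := pos_of_mem_ball (hx' 0)
  have h9 : ball c (2 * t) ⊆ closedBall c (9 * t) :=
    (ball_subset_ball (by linarith)).trans ball_subset_closedBall
  have hxR (k : ℕ) : x k ∈ closedBall c (9 * t) := h9 (ball_subset_ball (by linarith) (hx k))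
  have hxR' (k : ℕ) : x k ∈ closedBall c' (9 * t') :=
    ball_subset_closedBall (ball_subset_ball (by linarith) (hx' k))
  have hxΩ (k : ℕ) : x k ∈ Ω := hR (hxR k)
  have hM0 : 0 ≤ M := (norm_nonneg _).trans (hM _ (hxR' 0) c (mem_ball_self (by linarith)))
  have hnorm (N : ℕ) {w : ℂ} (hw : w ∈ ball c (2 * t)) :=
    hK.norm_kerSection_conjFinsupp_dividedDifference hxΩ hxi N (hR (h9 hw))
  suffices ∃ C, ∀ w ∈ ball c t, ∀ N,
      ‖kerSection K (conjFinsupp (dividedDifference x N (x N))) w‖ ≤ C * (3 / (8 * t)) ^ N by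
    obtain ⟨C, hC⟩ := this
    refine ⟨C, fun w hw N => ?_⟩
    rw [← hnorm N (ball_subset_ball (by linarith) hw)]
    exact hC w hw N
  refine exists_forall_norm_le_mul_pow (M := M) (a := 1 / (4 * t) + 1 / (4 * t'))
    (b := 1 / (4 * t)) ht (by positivity) (fun N => ?_) (lt_add_of_pos_right _ (by positivity))
    ?_ (fun N w hw => ?_) fun w hw => ?_
  · exact (hK.differentiableOn_kerSection (conjFinsupp_mem_supported
      (dividedDifference_mem_supported hxΩ N (hxΩ N)))).mono (h9.trans hR)
  · rw [div_lt_div_iff₀ (by positivity) (by positivity)]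
    linarith
  · rw [hnorm N hw]
    refine (norm_iteratedDSlope_le hΩ hR' hx' (hK.differentiableOn w (hR (h9 hw)))
      (fun z hz => hM z hz w hw) N (hxR' N)).trans ?_
    gcongr
    exact le_add_of_nonneg_left (by positivity)
  · obtain ⟨Cw, hCw⟩ :=
      hK.exists_forall_norm_le (isCompact_closedBall c (9 * t)) hR (hR (h9 hw))
    refine ⟨Cw, fun N => ?_⟩
    rw [hnorm N hw]
    exact norm_iteratedDSlope_le hΩ hR hx (hK.differentiableOn w (hR (h9 hw))) hCw N (hxR N)

lemma exists_closedBall_forall_norm_le (hΩ : IsOpen Ω) (hK : IsHolomorphicHermitianOn K Ω)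
    {w₀ : ℂ} (hw₀ : w₀ ∈ Ω) : ∃ t > 0, closedBall w₀ (9 * t) ⊆ Ω ∧
      ∃ M, ∀ z ∈ closedBall w₀ (9 * t), ∀ w ∈ closedBall w₀ (9 * t), ‖K z w‖ ≤ M := by
  obtain ⟨r, hr, hrΩ⟩ := nhds_basis_closedBall.mem_iff.1 (hΩ.mem_nhds hw₀)
  obtain ⟨s, rfl⟩ : ∃ s, r = 9 * s := ⟨r / 9, by ring⟩
  have hs : 0 < s := by linarith
  have hball : ball w₀ s ⊆ closedBall w₀ (9 * s) :=
    (ball_subset_ball (by linarith)).trans ball_subset_closedBall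
  obtain ⟨V, hVs, hV, ⟨c', hc'⟩, M, hM⟩ := hK.exists_isOpen_forall_norm_le
    (isCompact_closedBall w₀ (9 * s)) hrΩ isOpen_ball (nonempty_ball.2 hs) (hball.trans hrΩ)
  obtain ⟨r', hr', hr'V⟩ := nhds_basis_closedBall.mem_iff.1 (hV.mem_nhds hc')
  obtain ⟨s', rfl⟩ : ∃ s', r' = 9 * s' := ⟨r' / 9, by ring⟩
  obtain ⟨x, hxi, hx'⟩ := exists_injective_forall_mem_of_isOpen (isOpen_ball (x := c'))
    (nonempty_ball.2 (by linarith : 0 < s'))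
  have hx (k : ℕ) : x k ∈ ball w₀ s :=
    hVs (hr'V (ball_subset_closedBall (ball_subset_ball (by linarith) (hx' k))))
  obtain ⟨C, hC⟩ := hK.exists_forall_norm_iteratedDSlope_le hΩ hrΩ
    (hr'V.trans (hVs.trans (hball.trans hrΩ))) hx hx' hxi fun z hz w hw =>
      hM z (hr'V hz) w (ball_subset_closedBall (ball_subset_ball (by linarith) hw))
  have hsmall : closedBall w₀ (9 * (s / 10)) ⊆ ball w₀ s := closedBall_subset_ball (by linarith)
  exact ⟨s / 10, by positivity, hsmall.trans (hball.trans hrΩ), C * 4, fun z hz w hw =>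
    norm_le_of_forall_norm_iteratedDSlope_le hΩ hrΩ hx hxi
      (hK.differentiableOn w (hrΩ (hball (hsmall hw)))) (hC w (hsmall hw)) (hsmall hz)⟩

end IsHolomorphicHermitianOn

end LocalBoundedness

section Approximation

variable {Ω D : Set ℂ} {K : ℂ → ℂ → ℂ}

/-- The functional `h ↦ ∑ y, v y * h y` on the functions holomorphic on `Ω` has norm at most `ε`
with respect to the supremum over `D`. -/
def DualNormLE (Ω D : Set ℂ) (v : ℂ →₀ ℂ) (ε : ℝ) : Prop :=
  ∀ (h : ℂ → ℂ) (C : ℝ), DifferentiableOn ℂ h Ω → (∀ z ∈ D, ‖h z‖ ≤ C) →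
    ‖Finsupp.linearCombination ℂ h v‖ ≤ C * ε

namespace DualNormLE

variable {v v' : ℂ →₀ ℂ} {ε ε' : ℝ}

lemma add (hv : DualNormLE Ω D v ε) (hv' : DualNormLE Ω D v' ε') :
    DualNormLE Ω D (v + v') (ε + ε') := by
  intro h C hh hC
  rw [map_add, mul_add]
  exact norm_add_le_of_le (hv h C hh hC) (hv' h C hh hC)

lemma smul (a : ℂ) (hv : DualNormLE Ω D v ε) : DualNormLE Ω D (a • v) (‖a‖ * ε) := by
  intro h C hh hC
  rw [map_smul, norm_smul, mul_left_comm]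
  exact mul_le_mul_of_nonneg_left (hv h C hh hC) (norm_nonneg a)

lemma zero (hD : D.Nonempty) (hε : 0 ≤ ε) : DualNormLE Ω D 0 ε := by
  intro h C _ hC
  obtain ⟨z, hz⟩ := hD
  rw [map_zero, norm_zero]
  exact mul_nonneg ((norm_nonneg _).trans (hC z hz)) hε

end DualNormLE

lemma dualNormLE_newtonInterpolant_sub_single (hΩ : IsOpen Ω) {c : ℂ} {t : ℝ}
    (hR : closedBall c (9 * t) ⊆ Ω) {x : ℕ → ℂ} (hx : ∀ k, x k ∈ ball c t)
    (hxi : Function.Injective x) (N : ℕ) {y : ℂ} (hy : y ∈ ball c t) :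
    DualNormLE Ω (closedBall c (9 * t)) (newtonInterpolant x N y - Finsupp.single y 1)
      ((1 / 2) ^ N) := by
  intro h C hh hC
  rw [map_sub, Finsupp.linearCombination_single, one_smul, norm_sub_rev]
  exact norm_sub_linearCombination_newtonInterpolant_le hΩ hR hx hxi hh hC N hy

lemma exists_forall_dualNormLE_sub (hΩ : IsOpen Ω) {c : ℂ} {t : ℝ}
    (hR : closedBall c (9 * t) ⊆ Ω) {U : Set ℂ} (hU : IsOpen U) (hne : (U ∩ ball c t).Nonempty)
    {f : ℂ →₀ ℂ} (hf : f ∈ Finsupp.supported ℂ ℂ (U ∪ ball c t)) :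
    ∃ (Φ : ℕ → ℂ →₀ ℂ) (A : ℝ), ∀ N, Φ N ∈ Finsupp.supported ℂ ℂ U ∧
      DualNormLE Ω (closedBall c (9 * t)) (Φ N - f) (A * (1 / 2) ^ N) := by
  obtain ⟨x, hxi, hx⟩ := exists_injective_forall_mem_of_isOpen (hU.inter isOpen_ball) hne
  have ht : 0 < t := pos_of_mem_ball (hx 0).2
  have hD : (closedBall c (9 * t)).Nonempty := nonempty_closedBall.2 (by positivity)
  rw [Finsupp.supported_eq_span_single] at hf
  induction hf using Submodule.span_induction with
  | mem f hf =>
    obtain ⟨y, hy, rfl⟩ := hf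
    rcases hy with hyU | hyc
    · refine ⟨fun _ => Finsupp.single y 1, 0, fun N => ⟨Finsupp.single_mem_supported ℂ 1 hyU, ?_⟩⟩
      rw [sub_self]
      exact .zero hD (by simp)
    · refine ⟨fun N => newtonInterpolant x N y, 1, fun N =>
        ⟨newtonInterpolant_mem_supported (fun k => (hx k).1) N y, ?_⟩⟩
      rw [one_mul]
      exact dualNormLE_newtonInterpolant_sub_single hΩ hR (fun k => (hx k).2) hxi N hyc
  | zero =>
    refine ⟨0, 0, fun N => ⟨Submodule.zero_mem _, ?_⟩⟩
    rw [Pi.zero_apply, sub_self]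
    exact .zero hD (by simp)
  | add f g _ _ hf hg =>
    obtain ⟨Φ, A, hΦ⟩ := hf
    obtain ⟨Ψ, B, hΨ⟩ := hg
    refine ⟨Φ + Ψ, A + B, fun N => ⟨Submodule.add_mem _ (hΦ N).1 (hΨ N).1, ?_⟩⟩
    rw [Pi.add_apply, add_sub_add_comm, add_mul]
    exact (hΦ N).2.add (hΨ N).2
  | smul a f _ hf =>
    obtain ⟨Φ, A, hΦ⟩ := hf
    refine ⟨a • Φ, ‖a‖ * A, fun N => ⟨Submodule.smul_mem _ _ (hΦ N).1, ?_⟩⟩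
    rw [Pi.smul_apply, ← smul_sub, mul_assoc]
    exact (hΦ N).2.smul a

namespace IsHolomorphicHermitianOn

lemma norm_kerForm_le (hK : IsHolomorphicHermitianOn K Ω) {f v : ℂ →₀ ℂ}
    (hf : f ∈ Finsupp.supported ℂ ℂ Ω) {C ε : ℝ} (hC : ∀ z ∈ D, ‖kerSection K f z‖ ≤ C)
    (hv : DualNormLE Ω D (conjFinsupp v) ε) : ‖kerForm K f v‖ ≤ C * ε :=
  hv _ C (hK.differentiableOn_kerSection hf) hC

lemma norm_kerSection_le (hK : IsHolomorphicHermitianOn K Ω) (hD : D ⊆ Ω) {M : ℝ}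
    (hM : ∀ z ∈ D, ∀ w ∈ D, ‖K z w‖ ≤ M) {u : ℂ →₀ ℂ} (hu : u ∈ Finsupp.supported ℂ ℂ Ω)
    {ε : ℝ} (huε : DualNormLE Ω D (conjFinsupp u) ε) {z : ℂ} (hz : z ∈ D) :
    ‖kerSection K u z‖ ≤ M * ε := by
  rw [norm_kerSection_eq hK.hermitian hu (hD hz)]
  exact huε _ M (hK.differentiableOn z (hD hz)) fun w hw => hM w hw z hz

lemma tendsto_kerForm_zero (hK : IsHolomorphicHermitianOn K Ω) (hDc : IsCompact D) (hD : D ⊆ Ω)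
    {ι : Type*} {l : Filter ι} {f : ℂ →₀ ℂ} (hf : f ∈ Finsupp.supported ℂ ℂ Ω) {v : ι → ℂ →₀ ℂ}
    {ε : ι → ℝ} (hv : ∀ N, DualNormLE Ω D (conjFinsupp (v N)) (ε N)) (hε : Tendsto ε l (𝓝 0)) :
    Tendsto (fun N => kerForm K f (v N)) l (𝓝 0) := by
  obtain ⟨C, hC⟩ := hDc.exists_bound_of_continuousOn
    ((hK.differentiableOn_kerSection hf).continuousOn.mono hD)
  refine squeeze_zero_norm (fun N => hK.norm_kerForm_le hf hC (hv N)) ?_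
  simpa only [mul_zero] using hε.const_mul C

lemma tendsto_kerForm (hK : IsHolomorphicHermitianOn K Ω) (hDc : IsCompact D) (hD : D ⊆ Ω)
    {M : ℝ} (hM : ∀ z ∈ D, ∀ w ∈ D, ‖K z w‖ ≤ M) {ι : Type*} {l : Filter ι} {f g : ℂ →₀ ℂ}
    (hf : f ∈ Finsupp.supported ℂ ℂ Ω) (hg : g ∈ Finsupp.supported ℂ ℂ Ω) {u v : ι → ℂ →₀ ℂ}
    (hu : ∀ N, u N ∈ Finsupp.supported ℂ ℂ Ω) {δ ε : ι → ℝ}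
    (huδ : ∀ N, DualNormLE Ω D (conjFinsupp (u N - f)) (δ N))
    (hvε : ∀ N, DualNormLE Ω D (conjFinsupp (v N - g)) (ε N))
    (hδ : Tendsto δ l (𝓝 0)) (hε : Tendsto ε l (𝓝 0)) :
    Tendsto (fun N => kerForm K (u N) (v N)) l (𝓝 (kerForm K f g)) := by
  have hsub (N : ι) : u N - f ∈ Finsupp.supported ℂ ℂ Ω := Submodule.sub_mem _ (hu N) hf
  have hleft : Tendsto (fun N => kerForm K (u N - f) g) l (𝓝 0) := by
    have hconj := (Complex.continuous_conj.tendsto 0).comp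
      (hK.tendsto_kerForm_zero hDc hD hg huδ hδ)
    simpa only [Function.comp_def, conj_kerForm hK.hermitian hg (hsub _), map_zero] using hconj
  have hright : Tendsto (fun N => kerForm K f (v N - g)) l (𝓝 0) :=
    hK.tendsto_kerForm_zero hDc hD hf hvε hε
  have hboth : Tendsto (fun N => kerForm K (u N - f) (v N - g)) l (𝓝 0) := by
    refine squeeze_zero_norm (fun N => hK.norm_kerForm_le (hsub N)
      (fun z hz => hK.norm_kerSection_le hD hM (hsub N) (huδ N) hz) (hvε N)) ?_
    simpa only [mul_zero] using (hδ.const_mul M).mul hε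
  have hexpand (N : ι) : kerForm K (u N) (v N) = kerForm K f g + kerForm K (u N - f) g +
      kerForm K f (v N - g) + kerForm K (u N - f) (v N - g) := by
    simp only [map_sub, LinearMap.sub_apply]
    ring
  simpa only [hexpand, add_zero] using ((hleft.const_add _).add hright).add hboth

end IsHolomorphicHermitianOn

end Approximation

section Propagation

variable {Ω : Set ℂ} {K : ℂ → ℂ → ℂ}

lemma HasNegFamily.of_union_ball (hΩ : IsOpen Ω) (hK : IsHolomorphicHermitianOn K Ω) {c : ℂ}
    {t M : ℝ} (hR : closedBall c (9 * t) ⊆ Ω)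
    (hM : ∀ z ∈ closedBall c (9 * t), ∀ w ∈ closedBall c (9 * t), ‖K z w‖ ≤ M) {U : Set ℂ}
    (hU : IsOpen U) (hUΩ : U ⊆ Ω) (hne : (U ∩ ball c t).Nonempty) {n : ℕ}
    (h : HasNegFamily K (U ∪ ball c t) n) : HasNegFamily K U n := by
  obtain ⟨F, hFU, hF⟩ := h
  have ht : 0 < t := pos_of_mem_ball hne.choose_spec.2
  have hball : ball c t ⊆ Ω :=
    ((ball_subset_ball (by linarith)).trans ball_subset_closedBall).trans hR
  have hFΩ (i : Fin n) : F i ∈ Finsupp.supported ℂ ℂ Ω :=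
    Finsupp.supported_mono (union_subset hUΩ hball) (hFU i)
  choose Φ A hΦ using fun i =>
    exists_forall_dualNormLE_sub hΩ hR hU hne (conjFinsupp_mem_supported (hFU i))
  have hGU (i : Fin n) (N : ℕ) : conjFinsupp (Φ i N) ∈ Finsupp.supported ℂ ℂ U :=
    conjFinsupp_mem_supported (hΦ i N).1
  have hG (i : Fin n) (N : ℕ) : DualNormLE Ω (closedBall c (9 * t))
      (conjFinsupp (conjFinsupp (Φ i N) - F i)) (A i * (1 / 2) ^ N) := by
    simpa only [map_sub, conjFinsupp_conjFinsupp] using (hΦ i N).2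
  have hlim (i : Fin n) : Tendsto (fun N => A i * (1 / 2) ^ N) atTop (𝓝 0) := by
    simpa only [mul_zero] using (tendsto_pow_atTop_nhds_zero_of_lt_one
      (by norm_num : (0 : ℝ) ≤ 1 / 2) (by norm_num)).const_mul (A i)
  obtain ⟨N, hN⟩ := (hF.eventually (G := fun N i => conjFinsupp (Φ i N)) fun i j =>
    hK.tendsto_kerForm (isCompact_closedBall _ _) hR hM (hFΩ i) (hFΩ j)
      (fun N => Finsupp.supported_mono hUΩ (hGU i N)) (hG i) (hG j) (hlim i) (hlim j)).exists
  exact ⟨_, fun i => hGU i N, hN⟩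

lemma HasNegFamily.exists_mem_of_sUnion {X : Type*} {K : X → X → ℂ} {𝒰 : Set (Set X)}
    (hne : 𝒰.Nonempty) (hdir : DirectedOn (· ⊆ ·) 𝒰) {n : ℕ} (h : HasNegFamily K (⋃₀ 𝒰) n) :
    ∃ U ∈ 𝒰, HasNegFamily K U n := by
  obtain ⟨F, hFU, hF⟩ := h
  obtain ⟨U, hU, hsub⟩ := hdir.exists_mem_subset_of_finite_of_subset_sUnion hne
    (finite_iUnion fun i => (F i).support.finite_toSet) (iUnion_subset hFU)
  exact ⟨U, hU, F, fun i => (subset_iUnion _ i).trans hsub, hF⟩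

lemma HasNegFamily.of_isOpen_subset (hΩ : IsOpen Ω) (hΩc : IsPreconnected Ω)
    (hK : IsHolomorphicHermitianOn K Ω) {Ω₀ : Set ℂ} (hΩ₀ : IsOpen Ω₀) (hne : Ω₀.Nonempty)
    (hsub : Ω₀ ⊆ Ω) {n : ℕ} (h : HasNegFamily K Ω n) : HasNegFamily K Ω₀ n := by
  let 𝒰 : Set (Set ℂ) := {U | IsOpen U ∧ U ⊆ Ω ∧ (HasNegFamily K U n → HasNegFamily K Ω₀ n)}
  obtain ⟨U, hΩ₀U, ⟨hU, hUΩ, hUn⟩, hmax⟩ := zorn_subset_nonempty 𝒰 (fun 𝒞 h𝒞 hchain h𝒞ne => by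
    refine ⟨⋃₀ 𝒞, ⟨isOpen_sUnion fun U hU => (h𝒞 hU).1, sUnion_subset fun U hU => (h𝒞 hU).2.1,
      fun h𝒞n => ?_⟩, fun _ => subset_sUnion_of_mem⟩
    obtain ⟨U, hU, hUn⟩ := h𝒞n.exists_mem_of_sUnion h𝒞ne hchain.directedOn
    exact (h𝒞 hU).2.2 hUn) Ω₀ ⟨hΩ₀, hsub, id⟩
  refine hUn (h.mono (hΩc.subset_of_closure_inter_subset hU
    (hne.mono fun z hz => ⟨hsub hz, hΩ₀U hz⟩) fun c hc => ?_))
  obtain ⟨t, ht, hR, M, hM⟩ := hK.exists_closedBall_forall_norm_le hΩ hc.2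
  have hball : ball c t ⊆ Ω :=
    ((ball_subset_ball (by linarith)).trans ball_subset_closedBall).trans hR
  have hmeet : (U ∩ ball c t).Nonempty :=
    inter_comm U _ ▸ mem_closure_iff.1 hc.1 _ isOpen_ball (mem_ball_self ht)
  have hext : U ∪ ball c t ∈ 𝒰 := ⟨hU.union isOpen_ball, union_subset hUΩ hball, fun hn =>
    hUn (hn.of_union_ball hΩ hK hR hM hU hUΩ hmeet)⟩
  exact hmax hext subset_union_left (mem_union_right U (mem_ball_self ht))

end Propagation

theorem stmt14_general (Ω Ω₀ : Set ℂ) (hΩopen : IsOpen Ω) (hΩconn : IsPreconnected Ω)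
    (hΩ₀open : IsOpen Ω₀) (hΩ₀ne : Ω₀.Nonempty) (hsub : Ω₀ ⊆ Ω) (K : ℂ → ℂ → ℂ)
    (hK : IsHolomorphicHermitianOn K Ω) :
    negSig (fun z w : ↥Ω => K z w) = negSig (fun z w : ↥Ω₀ => K z w) := by
  refine ENat.eq_of_forall_natCast_le_iff fun n => ?_
  rw [natCast_le_negSig_restrict_iff hK.hermitian, natCast_le_negSig_restrict_iff
    fun z hz w hw => hK.hermitian z (hsub hz) w (hsub hw)]
  exact ⟨HasNegFamily.of_isOpen_subset hΩopen hΩconn hK hΩ₀open hΩ₀ne hsub,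
    HasNegFamily.mono hsub⟩

/-- Let `Ω ⊆ ℂ` be a nonempty open connected set and `K` a Hermitian kernel on
`Ω` that is holomorphic in the first variable. If the restriction `K₀` of `K` to a nonempty
open subset `Ω₀ ⊆ Ω` has finite negative signature, then `κ₋(K) = κ₋(K₀)`. -/
theorem stmt14 (Ω Ω₀ : Set ℂ) (hΩopen : IsOpen Ω) (hΩconn : IsConnected Ω)
    (hΩ₀open : IsOpen Ω₀) (hΩ₀ne : Ω₀.Nonempty) (hsub : Ω₀ ⊆ Ω)
    (K : ℂ → ℂ → ℂ)
    (hherm : ∀ z ∈ Ω, ∀ w ∈ Ω, K z w = (starRingEnd ℂ) (K w z))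
    (hhol : ∀ w ∈ Ω, DifferentiableOn ℂ (fun z => K z w) Ω)
    (hfin : negSig (fun z w : ↥Ω₀ => K z w) < ⊤) :
    negSig (fun z w : ↥Ω => K z w) = negSig (fun z w : ↥Ω₀ => K z w) :=
  stmt14_general Ω Ω₀ hΩopen hΩconn.isPreconnected hΩ₀open hΩ₀ne hsub K ⟨hherm, hhol⟩
end
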